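/- arXiv:1803.10123 — 2 statements merged into one kernel-verified Lean document; each statement's English description precedes it below -/
import Mathlib

section
/- Let f : ℝ → ℝ be continuously differentiable and concave, μ ∈ ℝ, σ > 0, and ε ~ N(0,1). Then E[f'(μ + σε) · ε] ≤ 0. -/
open MeasureTheory ProbabilityTheory

/-- For a continuously differentiable concave `f : ℝ → ℝ`, `μ ∈ ℝ`, `σ > 0`, and
`ε ~ N(0,1)`, we have `E[f'(μ + σε) · ε] ≤ 0`. -/
theorem stmt3 (f : ℝ → ℝ) (hf : ContDiff ℝ 1 f)
    (hconc : ConcaveOn ℝ Set.univ f) (μ σ : ℝ) (hσ : 0 < σ)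
    (hint : Integrable (fun ε : ℝ => deriv f (μ + σ * ε) * ε) (gaussianReal 0 1)) :
    (∫ ε : ℝ, deriv f (μ + σ * ε) * ε ∂(gaussianReal 0 1)) ≤ 0 := by
  have hanti : AntitoneOn (deriv f) Set.univ :=
    hconc.antitoneOn_deriv fun x _ => (hf.differentiable one_ne_zero) x
  have hid : Integrable (fun ε : ℝ => ε) (gaussianReal 0 1) :=
    (memLp_id_gaussianReal (μ := 0) (v := 1) 1).integrable le_rfl
  calc (∫ ε : ℝ, deriv f (μ + σ * ε) * ε ∂(gaussianReal 0 1))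
      ≤ ∫ ε : ℝ, deriv f μ * ε ∂(gaussianReal 0 1) := by
        refine integral_mono hint (hid.const_mul _) fun ε => ?_
        rcases le_total 0 ε with h | h
        · exact mul_le_mul_of_nonneg_right
            (hanti (Set.mem_univ _) (Set.mem_univ _) (by nlinarith)) h
        · exact mul_le_mul_of_nonpos_right
            (hanti (Set.mem_univ _) (Set.mem_univ _) (by nlinarith)) h
    _ = 0 := by
        rw [integral_const_mul, integral_id_gaussianReal, mul_zero]
    _ ≤ 0 := le_rfl
end

section
/- Fix v > 0, m > 0 and define the recursion v_{n+1} = g(v_n) where g(v) = v·√(1 + (v·(mv)/2)²) − v²·(mv)/2, starting from v_1 = v. Then v_n → 0 as n → ∞. -/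
open Filter

/-- With `a_n = m v_n` exactly, the BGD standard-deviation recursion
`v_{n+1} = v_n √(1 + (v_n·(m v_n)/2)²) − v_n²·(m v_n)/2` started at `v₀ > 0`
converges to `0`. -/
theorem stmt8 (v₀ m : ℝ) (hv₀ : 0 < v₀) (hm : 0 < m) (v : ℕ → ℝ)
    (hinit : v 0 = v₀)
    (hrec : ∀ n, v (n + 1) =
      v n * Real.sqrt (1 + (v n * (m * v n) / 2) ^ 2) - (v n) ^ 2 * (m * v n) / 2) :
    Tendsto v atTop (nhds 0) := by
  have hfac : ∀ n, v (n + 1) =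
      v n * (Real.sqrt (1 + (v n * (m * v n) / 2) ^ 2) - v n * (m * v n) / 2) := by
    intro n
    rw [hrec n]; ring
  have hpos : ∀ n, 0 < v n := by
    intro n
    induction n with
    | zero => rw [hinit]; exact hv₀
    | succ k ih =>
      rw [hfac k]
      refine mul_pos ih (sub_pos.mpr ?_)
      apply Real.lt_sqrt_of_sq_lt
      linarith
  have hanti : Antitone v := by
    refine antitone_nat_of_succ_le fun n => ?_
    have hn := hpos n
    have ht : 0 < v n * (m * v n) / 2 := by positivity
    rw [hfac n]
    refine mul_le_of_le_one_right hn.le ?_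
    rw [sub_le_iff_le_add]
    apply Real.sqrt_le_iff.mpr
    constructor
    · linarith
    · nlinarith
  have hbdd : BddBelow (Set.range v) := ⟨0, by rintro _ ⟨n, rfl⟩; exact (hpos n).le⟩
  have hlim := tendsto_atTop_ciInf hanti hbdd
  set L := ⨅ i, v i with hL
  have hL0 : 0 ≤ L := le_ciInf fun n => (hpos n).le
  have hcont : Continuous fun x : ℝ =>
      x * Real.sqrt (1 + (x * (m * x) / 2) ^ 2) - x ^ 2 * (m * x) / 2 := by fun_prop
  have h1 := (hcont.tendsto L).comp hlim
  have h2 := hlim.comp (tendsto_add_atTop_nat 1)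
  have h3 : (v ∘ fun n => n + 1) = (fun x : ℝ =>
      x * Real.sqrt (1 + (x * (m * x) / 2) ^ 2) - x ^ 2 * (m * x) / 2) ∘ v := by
    funext n; exact hrec n
  rw [h3] at h2
  have h4 := tendsto_nhds_unique h1 h2
  rcases hL0.eq_or_lt with h | h
  · rw [← h] at hlim; exact hlim
  · exfalso
    have ht : 0 < L * (m * L) / 2 := by positivity
    have h5 : Real.sqrt (1 + (L * (m * L) / 2) ^ 2) = 1 + L * (m * L) / 2 := by
      apply mul_left_cancel₀ h.ne'
      linarith
    have h6 := Real.sq_sqrt (show 0 ≤ 1 + (L * (m * L) / 2) ^ 2 by positivity)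
    rw [h5] at h6
    nlinarith
end
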